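/- Let d ≥ 1 be an integer. There exists a constant C, depending only on d, such that for all integers n ≥ d and m ≥ 2, the mean μ_{n,m} and variance σ²_{n,m} of the number of urns containing exactly d balls in the uniform occupancy model satisfy σ²_{n,m} ≤ C · μ_{n,m}. -/

import Mathlib

open MeasureTheory ProbabilityTheory

/-- The uniform occupancy model: `n` balls are placed independently and uniformly at
random into `m` urns. -/
noncomputable def occ (n m : ℕ) : Measure (Fin n → Fin m) :=
  (Fintype.card (Fin n → Fin m) : ENNReal)⁻¹ • Measure.count

/-- The number of balls in urn `i`. -/
def ballCount {n m : ℕ} (ω : Fin n → Fin m) (i : Fin m) : ℕ :=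
  (Finset.univ.filter fun b => ω b = i).card

/-- The number of urns containing exactly `d` balls. -/
def urnCount (d : ℕ) {n m : ℕ} (ω : Fin n → Fin m) : ℕ :=
  (Finset.univ.filter fun i => ballCount ω i = d).card

/-- `μ_{n,m}`, the mean number of urns containing exactly `d` balls. -/
noncomputable def occMean (d n m : ℕ) : ℝ :=
  ∫ ω, (urnCount d ω : ℝ) ∂(occ n m)


/-- `σ²_{n,m}`, the variance of the number of urns containing exactly `d` balls. -/
noncomputable def occVar (d n m : ℕ) : ℝ :=
  variance (fun ω => (urnCount d ω : ℝ)) (occ n m)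

/-!
The events `M_n(i) = d` and `M_n(j) = e` for two urns `i ≠ j` are almost negatively correlated: the
exact counts of placements, together with `(m - 2) * m ≤ (m - 1) ^ 2`, give
`P(M_n(i) = d, M_n(j) = e) * (1 - 1 / m) ^ (d + e) ≤ P(M_n(i) = d) * P(M_n(j) = e)`.
By Bernoulli's inequality the covariance of their indicators is thus at most `(d + e) / m` times
`P(M_n(i) = d)`. For `d = e`, the off-diagonal covariances of `Y_n = ∑ i, 1_{M_n(i) = d}` add up to
at most `2 * d * μ_{n,m}`, while the diagonal ones add up to at most `μ_{n,m}`.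
-/

theorem sub_two_mul_self_le_sub_one_sq (m : ℕ) : (m - 2) * m ≤ (m - 1) ^ 2 := by
  obtain _ | _ | m := m
  · simp
  · simp
  · simp only [Nat.reduceSubDiff, Nat.add_sub_cancel]
    nlinarith

section Counting

open Finset Fintype

variable {α β : Type*} [Fintype α] [Fintype β] [DecidableEq α] [DecidableEq β]

theorem card_filter_eqOn_and_notMem (f : α → β) (T : Finset α) (S : Finset β) :
    #{ω : α → β | (∀ a ∈ T, ω a = f a) ∧ ∀ a ∉ T, ω a ∉ S} = (card β - #S) ^ (card α - #T) := by
  have h_pi : ({ω : α → β | (∀ a ∈ T, ω a = f a) ∧ ∀ a ∉ T, ω a ∉ S} : Finset _) =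
      piFinset fun a => if a ∈ T then {f a} else Sᶜ := by
    ext ω
    simp only [mem_filter_univ, mem_piFinset, ← forall_and]
    refine forall_congr' fun a => ?_
    by_cases ha : a ∈ T <;> simp [ha]
  have h_card (a : α) : #(if a ∈ T then {f a} else Sᶜ) = if a ∈ T then 1 else card β - #S := by
    rw [apply_ite Finset.card, card_singleton, card_compl]
  rw [h_pi, card_piFinset]
  simp only [h_card, prod_ite, prod_const_one, one_mul, prod_const, filter_notMem_eq_sdiff,
    ← compl_eq_univ_sdiff, card_compl]

theorem card_filter_fiber_eq (i : β) (A : Finset α) :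
    #{ω : α → β | ({a | ω a = i} : Finset α) = A} = (card β - 1) ^ (card α - #A) := by
  rw [← card_singleton i, ← card_filter_eqOn_and_notMem (fun _ => i)]
  congr 1 with ω
  simp only [mem_filter_univ, Finset.ext_iff, mem_singleton]
  grind

theorem card_filter_fiber_eq_and_fiber_eq {i j : β} (hij : i ≠ j) {A B : Finset α}
    (hAB : Disjoint A B) :
    #{ω : α → β | ({a | ω a = i} : Finset α) = A ∧ ({a | ω a = j} : Finset α) = B} =
      (card β - 2) ^ (card α - #A - #B) := by
  rw [← card_pair hij, Nat.sub_sub, ← card_union_of_disjoint hAB,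
    ← card_filter_eqOn_and_notMem fun a => if a ∈ A then i else j]
  congr 1 with ω
  simp only [mem_filter_univ, Finset.ext_iff, mem_union, mem_insert, mem_singleton]
  grind [Finset.disjoint_left]

theorem card_filter_card_fiber_eq (i : β) (d : ℕ) :
    #{ω : α → β | #{a | ω a = i} = d} = (card α).choose d * (card β - 1) ^ (card α - d) := by
  rw [card_eq_sum_card_fiberwise (f := fun ω => ({a | ω a = i} : Finset α))
    (t := powersetCard d univ) (by simp [Set.MapsTo]), sum_const_nat (fun A hA => ?_),
    card_powersetCard, card_univ]
  rw [← (mem_powersetCard.1 hA).2, ← card_filter_fiber_eq i A, filter_filter]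
  congr 1 with ω
  grind

theorem card_filter_fiber_eq_and_card_fiber_eq {i j : β} (hij : i ≠ j) (A : Finset α) (e : ℕ) :
    #{ω : α → β | ({a | ω a = i} : Finset α) = A ∧ #{a | ω a = j} = e} =
      (card α - #A).choose e * (card β - 2) ^ (card α - #A - e) := by
  rw [card_eq_sum_card_fiberwise (f := fun ω => ({a | ω a = j} : Finset α))
    (t := powersetCard e Aᶜ) (fun ω hω => ?_), sum_const_nat (fun B hB => ?_),
    card_powersetCard, card_compl]
  · obtain ⟨hBA, rfl⟩ := mem_powersetCard.1 hB
    rw [← card_filter_fiber_eq_and_fiber_eq hij (subset_compl_iff_disjoint_left.1 hBA),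
      filter_filter]
    congr 1 with ω
    grind
  · obtain ⟨hA, he⟩ := (mem_filter_univ ω).1 hω
    refine mem_powersetCard.2 ⟨fun a ha => ?_, he⟩
    rw [mem_compl, ← hA]
    grind

theorem card_filter_card_fiber_eq_and_card_fiber_eq {i j : β} (hij : i ≠ j) (d e : ℕ) :
    #{ω : α → β | #{a | ω a = i} = d ∧ #{a | ω a = j} = e} =
      (card α).choose d * ((card α - d).choose e * (card β - 2) ^ (card α - d - e)) := by
  rw [card_eq_sum_card_fiberwise (f := fun ω => ({a | ω a = i} : Finset α))
    (t := powersetCard d univ) (fun ω hω => ?_), sum_const_nat (fun A hA => ?_),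
    card_powersetCard, card_univ]
  · obtain rfl := (mem_powersetCard.1 hA).2
    rw [← card_filter_fiber_eq_and_card_fiber_eq hij, filter_filter]
    congr 1 with ω
    grind
  · exact mem_powersetCard.2 ⟨subset_univ _, ((mem_filter_univ ω).1 hω).1⟩

theorem card_filter_card_fiber_eq_and_card_fiber_eq_mul_le {i j : β} (hij : i ≠ j) (d e : ℕ) :
    #{ω : α → β | #{a | ω a = i} = d ∧ #{a | ω a = j} = e} *
        (card β ^ card α * (card β - 1) ^ (d + e)) ≤
      #{ω : α → β | #{a | ω a = i} = d} * #{ω : α → β | #{a | ω a = j} = e} *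
        card β ^ (d + e) := by
  rw [card_filter_card_fiber_eq_and_card_fiber_eq hij, card_filter_card_fiber_eq,
    card_filter_card_fiber_eq]
  generalize card α = n, card β = m
  obtain hn | hn := lt_or_ge n (d + e)
  · have h_choose : n.choose d * (n - d).choose e = 0 := by
      rw [Nat.mul_eq_zero, Nat.choose_eq_zero_iff, Nat.choose_eq_zero_iff]
      lia
    rw [← mul_assoc (n.choose d), h_choose, zero_mul, zero_mul]
    exact Nat.zero_le _
  obtain ⟨k, rfl⟩ := Nat.exists_eq_add_of_le' hn
  rw [show k + (d + e) - d - e = k by lia, show k + (d + e) - d = k + e by lia,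
    show k + (d + e) - e = k + d by lia]
  calc _ = (k + (d + e)).choose d * (k + e).choose e * ((m - 2) * m) ^ k * (m - 1) ^ (d + e) *
        m ^ (d + e) := by ring
    _ ≤ (k + (d + e)).choose d * (k + (d + e)).choose e * ((m - 1) ^ 2) ^ k * (m - 1) ^ (d + e) *
        m ^ (d + e) := by
      gcongr
      · lia
      · exact sub_two_mul_self_le_sub_one_sq m
    _ = _ := by ring

end Counting

section Variance

variable {Ω ι : Type*} [MeasurableSpace Ω] {P : Measure Ω}

theorem memLp_indicator_one [IsFiniteMeasure P] {s : Set Ω} (hs : MeasurableSet s)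
    (p : ENNReal) : MemLp (s.indicator (1 : Ω → ℝ)) p P :=
  memLp_indicator_const p hs 1 (.inr (measure_ne_top P s))

theorem integral_sum_indicator_one [Fintype ι] [IsFiniteMeasure P] {E : ι → Set Ω}
    (hE : ∀ i, MeasurableSet (E i)) :
    ∫ ω, (∑ i, (E i).indicator (1 : Ω → ℝ)) ω ∂P = ∑ i, P.real (E i) := by
  simp only [Finset.sum_apply]
  rw [integral_finsetSum _ fun i _ => (memLp_indicator_one (hE i) 1).integrable le_rfl]
  simp only [integral_indicator_one (hE _)]

theorem covariance_indicator_one [IsProbabilityMeasure P] {s t : Set Ω} (hs : MeasurableSet s)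
    (ht : MeasurableSet t) :
    cov[s.indicator 1, t.indicator 1; P] = P.real (s ∩ t) - P.real s * P.real t := by
  rw [covariance_eq_sub (memLp_indicator_one hs 2) (memLp_indicator_one ht 2),
    ← Set.inter_indicator_one, integral_indicator_one hs, integral_indicator_one ht,
    integral_indicator_one (hs.inter ht)]

theorem variance_sum_indicator_one_le [Fintype ι] [IsProbabilityMeasure P] {E : ι → Set Ω}
    (hE : ∀ i, MeasurableSet (E i)) {c : ℝ} (hc : 0 ≤ c)
    (hcorr : ∀ i j, i ≠ j → P.real (E i ∩ E j) ≤ P.real (E i) * P.real (E j) + c * P.real (E i)) :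
    Var[∑ i, (E i).indicator 1; P] ≤
      (1 + Fintype.card ι * c) * ∫ ω, (∑ i, (E i).indicator 1) ω ∂P := by
  classical
  have h_cov (i j : ι) : cov[(E i).indicator 1, (E j).indicator 1; P] ≤
      (if i = j then P.real (E i) else 0) + c * P.real (E i) := by
    rw [covariance_indicator_one (hE i) (hE j)]
    obtain rfl | hij := eq_or_ne i j
    · rw [if_pos rfl, Set.inter_self]
      linarith [mul_self_nonneg (P.real (E i)),
        mul_nonneg hc (measureReal_nonneg (μ := P) (s := E i))]
    · rw [if_neg hij]
      linarith [hcorr i j hij]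
  calc Var[∑ i, (E i).indicator 1; P]
      = ∑ i, ∑ j, cov[(E i).indicator 1, (E j).indicator 1; P] :=
      variance_sum fun i => memLp_indicator_one (hE i) 2
    _ ≤ ∑ i, ∑ j, ((if i = j then P.real (E i) else 0) + c * P.real (E i)) := by
      gcongr with i _ j _
      exact h_cov i j
    _ = (1 + Fintype.card ι * c) * ∑ i, P.real (E i) := by
      simp only [Finset.sum_add_distrib, Finset.sum_ite_eq, Finset.mem_univ, if_true,
        Finset.sum_const, Finset.card_univ, nsmul_eq_mul, ← Finset.mul_sum]
      ring
    _ = _ := by rw [integral_sum_indicator_one hE]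

end Variance

theorem occ_eq_uniformOn_univ (n m : ℕ) : occ n m = uniformOn Set.univ := by
  ext s
  rw [uniformOn_univ, occ, Measure.smul_apply, smul_eq_mul, ENNReal.div_eq_inv_mul]

instance isProbabilityMeasure_occ (n m : ℕ) [NeZero m] : IsProbabilityMeasure (occ n m) := by
  rw [occ_eq_uniformOn_univ]
  infer_instance

open Finset in
theorem occ_real_setOf {n m : ℕ} (p : (Fin n → Fin m) → Prop) [DecidablePred p] :
    (occ n m).real {ω | p ω} = (#{ω | p ω} : ℝ) / (m : ℝ) ^ n := by
  rw [measureReal_def, occ_eq_uniformOn_univ, uniformOn_univ, ← coe_filter_univ,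
    Measure.count_apply_finset]
  simp

section Correlation

variable {n m : ℕ} [NeZero m] {i j : Fin m}

open Finset in
theorem occ_real_ballCount_eq_inter_mul_le (hij : i ≠ j) (d e : ℕ) :
    (occ n m).real ({ω | ballCount ω i = d} ∩ {ω | ballCount ω j = e}) *
        (1 - 1 / (m : ℝ)) ^ (d + e) ≤
      (occ n m).real {ω | ballCount ω i = d} * (occ n m).real {ω | ballCount ω j = e} := by
  have hm : (0 : ℝ) < m := Nat.cast_pos.2 (NeZero.pos m)
  have h_count : #{ω : Fin n → Fin m | ballCount ω i = d ∧ ballCount ω j = e} *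
        (m ^ n * (m - 1) ^ (d + e)) ≤
      #{ω : Fin n → Fin m | ballCount ω i = d} * #{ω : Fin n → Fin m | ballCount ω j = e} *
        m ^ (d + e) := by
    have h := card_filter_card_fiber_eq_and_card_fiber_eq_mul_le (α := Fin n) hij d e
    rwa [Fintype.card_fin, Fintype.card_fin] at h
  have h_count_real := (Nat.cast_le (α := ℝ)).2 h_count
  push_cast [Nat.cast_sub (NeZero.one_le (n := m))] at h_count_real
  rw [← Set.ofPred_and, occ_real_setOf, occ_real_setOf, occ_real_setOf, one_sub_div hm.ne', div_pow,
    div_mul_div_comm, div_mul_div_comm, div_le_div_iff₀ (by positivity) (by positivity)]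
  linear_combination (m : ℝ) ^ n * h_count_real

theorem occ_real_ballCount_eq_inter_le (hij : i ≠ j) (d e : ℕ) :
    (occ n m).real ({ω | ballCount ω i = d} ∩ {ω | ballCount ω j = e}) ≤
      (occ n m).real {ω | ballCount ω i = d} * (occ n m).real {ω | ballCount ω j = e} +
        (d + e) / m * (occ n m).real {ω | ballCount ω i = d} := by
  set q := (occ n m).real ({ω | ballCount ω i = d} ∩ {ω | ballCount ω j = e})
  have h_mono : q ≤ (occ n m).real {ω | ballCount ω i = d} :=
    measureReal_mono Set.inter_subset_left
  have h_bernoulli : 1 - (d + e) / m ≤ (1 - 1 / (m : ℝ)) ^ (d + e) := by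
    have h_inv : 1 / (m : ℝ) ≤ 1 := by
      simpa using Nat.cast_inv_le_one m
    refine le_of_eq_of_le ?_ (one_add_mul_sub_le_pow (by linarith) (d + e))
    push_cast
    ring
  calc q = q * (1 - (d + e) / m) + (d + e) / m * q := by ring
    _ ≤ q * (1 - 1 / (m : ℝ)) ^ (d + e) + (d + e) / m * q := by gcongr
    _ ≤ _ := add_le_add (occ_real_ballCount_eq_inter_mul_le hij d e) (by gcongr)

end Correlation

theorem urnCount_eq_sum_indicator (d n m : ℕ) :
    (fun ω : Fin n → Fin m => (urnCount d ω : ℝ)) =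
      ∑ i, {ω : Fin n → Fin m | ballCount ω i = d}.indicator 1 := by
  ext ω
  simp [urnCount, Set.indicator_apply]

theorem occupancy_variance_le_mean_general (d n m : ℕ) [NeZero m] :
    occVar d n m ≤ (1 + 2 * d) * occMean d n m := by
  have h_const : (m : ℝ) * ((d + d) / m) = 2 * d := by
    rw [mul_div_cancel₀ _ (NeZero.ne (m : ℝ)), two_mul]
  have h := variance_sum_indicator_one_le (P := occ n m)
    (E := fun i => {ω : Fin n → Fin m | ballCount ω i = d})
    (fun i => MeasurableSet.of_discrete) (c := (d + d) / m) (by positivity)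
    (fun i j hij => occ_real_ballCount_eq_inter_le hij d d)
  rwa [← urnCount_eq_sum_indicator, Fintype.card_fin, h_const] at h

/-- Lemma 3.2, Part 2(a): `σ²_{n,m} ≤ C·μ_{n,m}` uniformly in `n ≥ d`, `m ≥ 2`. -/
theorem occupancy_variance_le_mean (d : ℕ) (hd : 1 ≤ d) :
    ∃ C : ℝ, 0 < C ∧ ∀ n m : ℕ, d ≤ n → 2 ≤ m →
      occVar d n m ≤ C * occMean d n m := by
  refine ⟨1 + 2 * d, by positivity, fun n m _ hm => ?_⟩
  have : NeZero m := ⟨by lia⟩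
  exact occupancy_variance_le_mean_general d n m
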